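/- The crystal lattice C itself is simple: every equivalence relation on its universe that is compatible with the operations ∧, ∨, ¬, and · is either the identity relation or the full relation. -/

import Mathlib

/-- The universe of the crystal lattice `C`: six elements `⊥, t, a, b, f, ⊤`. -/
inductive Cry : Type
  | bot | t | a | b | f | top
  deriving DecidableEq

namespace Cry

/-- The lattice order of `C`: `⊥ < t < a < f < ⊤` and `t < b < f`, with `a, b` incomparable. -/
def leb : Cry → Cry → Bool
  | bot, _ => true
  | _, top => true
  | t, bot => false
  | t, _ => true
  | a, a => true
  | a, f => true
  | a, _ => false
  | b, b => true
  | b, f => true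
  | b, _ => false
  | f, f => true
  | f, _ => false
  | top, _ => false

/-- Meet: the only incomparable pair is `{a, b}`, whose meet is `t`. -/
def meet (x y : Cry) : Cry := if leb x y then x else if leb y x then y else t

/-- Join: the only incomparable pair is `{a, b}`, whose join is `f`. -/
def join (x y : Cry) : Cry := if leb x y then y else if leb y x then x else f

/-- The involution `¬`. -/
def neg : Cry → Cry
  | bot => top
  | t => f
  | a => a
  | b => b
  | f => t
  | top => bot

/-- Fusion `·`: commutative with identity `t`; `⊥·x = ⊥`; `⊤·x = ⊤` for `x ≠ ⊥`;
`a·a = a`; `b·b = b`; and `a·b = a·f = b·f = f·f = ⊤`. -/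
def fus : Cry → Cry → Cry
  | bot, _ => bot
  | _, bot => bot
  | top, _ => top
  | _, top => top
  | t, x => x
  | x, t => x
  | a, a => a
  | b, b => b
  | _, _ => top

/-- A subalgebra of `C`: a nonempty subset closed under `∧`, `∨`, `·`, and `¬`. -/
def IsSubalg (S : Set Cry) : Prop :=
  S.Nonempty ∧
  (∀ x ∈ S, ∀ y ∈ S, meet x y ∈ S ∧ join x y ∈ S ∧ fus x y ∈ S) ∧
  (∀ x ∈ S, neg x ∈ S)

/-- A congruence on the subset `S` (with the operations inherited from `C`):
an equivalence relation on `S` compatible with `∧`, `∨`, `·`, and `¬`. -/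
def IsCongOn (S : Set Cry) (r : Cry → Cry → Prop) : Prop :=
  (∀ x ∈ S, r x x) ∧
  (∀ x ∈ S, ∀ y ∈ S, r x y → r y x) ∧
  (∀ x ∈ S, ∀ y ∈ S, ∀ z ∈ S, r x y → r y z → r x z) ∧
  (∀ x ∈ S, ∀ y ∈ S, ∀ u ∈ S, ∀ v ∈ S, r x y → r u v →
      r (meet x u) (meet y v) ∧ r (join x u) (join y v) ∧ r (fus x u) (fus y v)) ∧
  (∀ x ∈ S, ∀ y ∈ S, r x y → r (neg x) (neg y))

end Cry

/-!
In `C` the order is read off from fusion and involution: `x ≤ y` iff `x · ¬y ≠ ⊤`. So if `x ≰ y` are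
congruent, then `⊤ = x · ¬y` is congruent to `y · ¬y ≠ ⊤`. Negating, `⊥` is congruent to some
`z ≠ ⊥`, and fusing with `⊤` makes `⊥` congruent to `⊤`, which collapses everything. All elements
used are generated by `x` and `y`, so the argument works inside any subalgebra.
-/

namespace Cry

variable {S : Set Cry} {r : Cry → Cry → Prop} {x y u v : Cry}

theorem leb_refl (x : Cry) : leb x x := by
  cases x <;> rfl

theorem leb_antisymm (hxy : leb x y) (hyx : leb y x) : x = y := by
  cases x <;> cases y <;> first | rfl | contradiction

theorem bot_meet (x : Cry) : meet bot x = bot := rfl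

theorem top_meet (x : Cry) : meet top x = x := by
  cases x <;> rfl

theorem neg_eq_bot_iff : neg x = bot ↔ x = top := by
  cases x <;> decide

theorem bot_fus (x : Cry) : fus bot x = bot := rfl

theorem fus_top_of_ne_bot (hx : x ≠ bot) : fus x top = top := by
  cases x <;> first | rfl | contradiction

theorem fus_neg_eq_top_iff : fus x (neg y) = top ↔ ¬ leb x y := by
  cases x <;> cases y <;> decide

theorem fus_neg_self_ne_top (x : Cry) : fus x (neg x) ≠ top :=
  fun h => fus_neg_eq_top_iff.1 h (leb_refl x)

theorem isSubalg_univ : IsSubalg Set.univ :=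
  ⟨⟨bot, trivial⟩, fun _ _ _ _ => ⟨trivial, trivial, trivial⟩, fun _ _ => trivial⟩

namespace IsSubalg

theorem fus_mem (hS : IsSubalg S) (hx : x ∈ S) (hy : y ∈ S) : fus x y ∈ S :=
  (hS.2.1 x hx y hy).2.2

theorem neg_mem (hS : IsSubalg S) (hx : x ∈ S) : neg x ∈ S :=
  hS.2.2 x hx

theorem top_mem_of_not_leb (hS : IsSubalg S) (hx : x ∈ S) (hy : y ∈ S) (hxy : ¬ leb x y) :
    top ∈ S :=
  fus_neg_eq_top_iff.2 hxy ▸ hS.fus_mem hx (hS.neg_mem hy)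

end IsSubalg

namespace IsCongOn

theorem symm (hr : IsCongOn S r) (hx : x ∈ S) (hy : y ∈ S) (h : r x y) : r y x :=
  hr.2.1 x hx y hy h

theorem trans (hr : IsCongOn S r) (hx : x ∈ S) (hy : y ∈ S) (hu : u ∈ S) (hxy : r x y)
    (hyu : r y u) : r x u :=
  hr.2.2.1 x hx y hy u hu hxy hyu

theorem meet_congr_left (hr : IsCongOn S r) (hx : x ∈ S) (hy : y ∈ S) (hu : u ∈ S) (h : r x y) :
    r (meet x u) (meet y u) :=
  (hr.2.2.2.1 x hx y hy u hu u hu h (hr.1 u hu)).1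

theorem fus_congr_left (hr : IsCongOn S r) (hx : x ∈ S) (hy : y ∈ S) (hu : u ∈ S) (h : r x y) :
    r (fus x u) (fus y u) :=
  (hr.2.2.2.1 x hx y hy u hu u hu h (hr.1 u hu)).2.2

theorem neg_congr (hr : IsCongOn S r) (hx : x ∈ S) (hy : y ∈ S) (h : r x y) :
    r (neg x) (neg y) :=
  hr.2.2.2.2 x hx y hy h

theorem rel_of_rel_bot_top (hr : IsCongOn S r) (hbot : bot ∈ S) (htop : top ∈ S)
    (h : r bot top) (hu : u ∈ S) (hv : v ∈ S) : r u v := by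
  have bot_rel {w : Cry} (hw : w ∈ S) : r bot w := by
    simpa only [bot_meet, top_meet] using hr.meet_congr_left hbot htop hw h
  exact hr.trans hu hbot hv (hr.symm hbot hu (bot_rel hu)) (bot_rel hv)

theorem rel_bot_top_of_rel_top (hr : IsCongOn S r) (hS : IsSubalg S) (htop : top ∈ S)
    (hx : x ∈ S) (hne : x ≠ top) (h : r top x) : r bot top := by
  have hbot : bot ∈ S := hS.neg_mem htop
  have bot_rel_neg : r bot (neg x) := hr.neg_congr htop hx h
  have neg_ne_bot : neg x ≠ bot := mt neg_eq_bot_iff.1 hne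
  simpa only [bot_fus, fus_top_of_ne_bot neg_ne_bot] using
    hr.fus_congr_left hbot (hS.neg_mem hx) htop bot_rel_neg

theorem rel_bot_top_of_not_leb (hr : IsCongOn S r) (hS : IsSubalg S) (hx : x ∈ S) (hy : y ∈ S)
    (hxy : ¬ leb x y) (h : r x y) : r bot top := by
  have hny : neg y ∈ S := hS.neg_mem hy
  have top_rel : r top (fus y (neg y)) :=
    fus_neg_eq_top_iff.2 hxy ▸ hr.fus_congr_left hx hy hny h
  exact hr.rel_bot_top_of_rel_top hS (hS.top_mem_of_not_leb hx hy hxy) (hS.fus_mem hy hny)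
    (fus_neg_self_ne_top y) top_rel

end IsCongOn

end Cry

theorem crystal_simple_general {S : Set Cry} {r : Cry → Cry → Prop} (hS : Cry.IsSubalg S)
    (hr : Cry.IsCongOn S r) :
    (∀ x ∈ S, ∀ y ∈ S, r x y → x = y) ∨ (∀ x ∈ S, ∀ y ∈ S, r x y) := by
  refine or_iff_not_imp_left.2 fun not_identity => ?_
  push Not at not_identity
  obtain ⟨x, hx, y, hy, hxy, hne⟩ := not_identity
  wlog hle : ¬ Cry.leb x y generalizing x y
  · exact this y hy x hx (hr.symm hx hy hxy) hne.symm
      fun hyx => hne (Cry.leb_antisymm (not_not.1 hle) hyx)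
  have htop : Cry.top ∈ S := hS.top_mem_of_not_leb hx hy hle
  have bot_rel_top : r Cry.bot Cry.top := hr.rel_bot_top_of_not_leb hS hx hy hle hxy
  exact fun u hu v hv => hr.rel_of_rel_bot_top (hS.neg_mem htop) htop bot_rel_top hu hv

/-- The crystal lattice `C` itself is simple: every congruence is the identity or full. -/
theorem crystal_simple (r : Cry → Cry → Prop)
    (hcong : Cry.IsCongOn Set.univ r) :
    (∀ x y : Cry, r x y → x = y) ∨ (∀ x y : Cry, r x y) := by
  simpa using crystal_simple_general Cry.isSubalg_univ hcong
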